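/- Let Q_t be the Kac walk of length t on ℝ^d. Then for any K ≥ 2 and any t ≥ 0, P[ max_{i,j ∈ {1,…,d}} |Q_t[i,j]| ≥ K √((log d)/d) ] ≤ 2 d³ exp(−t/(2d)) + 2 d^{5/2} exp(−K² (log d)/2). -/

import Mathlib

/-!
The rotation angle being uniform, a step of the walk started at `x` is the same as resampling the
polar angle of `x` in the chosen coordinate plane. Two walks started at vectors `x` and `y` of equal
norm can therefore be driven by common polar angles, and then `∑ k, (x k ^ 2 - y k ^ 2) ^ 2`
contracts in mean by the factor `1 - 1 / (2 * d)` at each step. Take `x = e_j`, so that `Q x` is a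
column of `Q`, and let `y` be a random sign vector with entries `± 1 / √d`: as `Q` is orthogonal,
Hoeffding's inequality makes each `(Q y)_i` subgaussian with variance proxy `1 / d`. Splitting the
threshold as `K² log d / d = (K² - 1) log d / d + log d / d`, Hoeffding's inequality handles the
first part for `Q y`, Markov's inequality the second for the coupling error, and a union bound over
the columns concludes. When `K² ≤ 5` or `d = 1` the bound exceeds `1`.
-/

noncomputable section

open MeasureTheory Real
open scoped ENNReal

namespace KacJL

instance matrixMeasurableSpace {m n : Type*} : MeasurableSpace (Matrix m n ℝ) :=
  inferInstanceAs (MeasurableSpace (m → n → ℝ))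

/-- The rotation by angle `θ` in the `(i,j)` coordinate plane of `ℝ^d`. -/
def rotM (d : ℕ) (i j : Fin d) (θ : ℝ) : Matrix (Fin d) (Fin d) ℝ :=
  Matrix.of fun k l =>
    if k = i ∧ l = i then Real.cos θ
    else if k = i ∧ l = j then -Real.sin θ
    else if k = j ∧ l = i then Real.sin θ
    else if k = j ∧ l = j then Real.cos θ
    else if k = l then 1 else 0

/-- The uniform distribution on pairs of distinct coordinates in `Fin d`. -/
def pairUniform (d : ℕ) : Measure (Fin d × Fin d) :=
  ((d * (d - 1) : ℕ) : ℝ≥0∞)⁻¹ •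
    (Measure.count.restrict {p : Fin d × Fin d | p.1 ≠ p.2})

/-- The uniform distribution on `[0, 2π)`. -/
def angleUniform : Measure ℝ :=
  (ENNReal.ofReal (2 * Real.pi))⁻¹ • (volume.restrict (Set.Ico 0 (2 * Real.pi)))

/-- The distribution of the update variables of one step of the Kac walk. -/
def kacParam (d : ℕ) : Measure ((Fin d × Fin d) × ℝ) :=
  (pairUniform d).prod angleUniform

/-- The product `R_{i_T,j_T,θ_T} ⋯ R_{i_1,j_1,θ_1}` of the rotations determined by the
update variables `ω`. -/
def kacMatrix {d T : ℕ} (ω : Fin T → (Fin d × Fin d) × ℝ) : Matrix (Fin d) (Fin d) ℝ :=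
  ((List.ofFn fun t => rotM d (ω t).1.1 (ω t).1.2 (ω t).2).reverse).prod

/-- The law of the Kac walk of length `T` on `ℝ^d`. -/
def kacMeasure (d T : ℕ) : Measure (Matrix (Fin d) (Fin d) ℝ) :=
  Measure.map kacMatrix (Measure.pi fun _ : Fin T => kacParam d)

/-- The Euclidean norm on `ℝ^d`. -/
def l2norm {d : ℕ} (x : Fin d → ℝ) : ℝ := Real.sqrt (∑ i, x i ^ 2)

open ProbabilityTheory
open scoped Matrix NNReal

section ZeroOrProbability

instance isZeroOrProbabilityMeasure_prod {α β : Type*} [MeasurableSpace α] [MeasurableSpace β]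
    (μ : Measure α) (ν : Measure β) [IsZeroOrProbabilityMeasure μ]
    [IsZeroOrProbabilityMeasure ν] : IsZeroOrProbabilityMeasure (μ.prod ν) := by
  rcases IsZeroOrProbabilityMeasure.measure_univ (μ := μ) with hμ | hμ <;>
    rcases IsZeroOrProbabilityMeasure.measure_univ (μ := ν) with hν | hν <;>
    simp [isZeroOrProbabilityMeasure_iff, Measure.prod_apply, hμ, hν]

instance isZeroOrProbabilityMeasure_pi {ι : Type*} [Fintype ι] {α : ι → Type*}
    [∀ i, MeasurableSpace (α i)] (μ : ∀ i, Measure (α i))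
    [∀ i, IsZeroOrProbabilityMeasure (μ i)] : IsZeroOrProbabilityMeasure (Measure.pi μ) := by
  rw [isZeroOrProbabilityMeasure_iff, Measure.pi_univ]
  by_cases h : ∃ i, μ i Set.univ = 0
  · exact .inl (Finset.prod_eq_zero_iff.2 (by simpa using h))
  · push Not at h
    exact .inr (Finset.prod_eq_one fun i _ =>
      IsZeroOrProbabilityMeasure.measure_univ.resolve_left (h i))

end ZeroOrProbability

section UniformAngle

instance isProbabilityMeasure_angleUniform : IsProbabilityMeasure angleUniform where
  measure_univ := by
    have h : ENNReal.ofReal (2 * π) ≠ 0 := by simp [pi_pos]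
    rw [angleUniform, Measure.smul_apply, Measure.restrict_apply_univ, Real.volume_Ico, sub_zero,
      smul_eq_mul, ENNReal.inv_mul_cancel h ENNReal.ofReal_ne_top]

lemma lintegral_angleUniform_add {F : ℝ → ℝ≥0∞} (hF : F.Periodic (2 * π)) (a : ℝ) :
    ∫⁻ θ, F (θ + a) ∂angleUniform = ∫⁻ θ, F θ ∂angleUniform := by
  have : Fact (0 < 2 * π) := ⟨two_pi_pos⟩
  have toCircle (b : ℝ) : ∫⁻ θ in Set.Ico 0 (2 * π), F (θ + b) =
      ∫⁻ z : AddCircle (2 * π), hF.lift (z + b) := by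
    rw [setLIntegral_congr Ico_ae_eq_Ioc, ← AddCircle.lintegral_preimage (2 * π) 0, zero_add]
    rfl
  have h := toCircle 0
  simp only [add_zero, QuotientAddGroup.mk_zero] at h
  simp only [angleUniform, lintegral_smul_measure, toCircle a, h,
    lintegral_add_right_eq_self hF.lift]

lemma integral_angleUniform (f : ℝ → ℝ) :
    ∫ θ, f θ ∂angleUniform = (2 * π)⁻¹ * ∫ θ in 0..2 * π, f θ := by
  rw [angleUniform, integral_smul_measure, setIntegral_congr_set Ico_ae_eq_Ioc,
    ← intervalIntegral.integral_of_le two_pi_pos.le, ENNReal.toReal_inv,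
    ENNReal.toReal_ofReal two_pi_pos.le, smul_eq_mul]

lemma integral_cos_pow_four_add_sin_pow_four_angleUniform :
    ∫ θ, (cos θ ^ 4 + sin θ ^ 4) ∂angleUniform = 3 / 4 := by
  have expand (θ : ℝ) : cos θ ^ 4 + sin θ ^ 4 = 1 - 2 * (sin θ ^ 2 * cos θ ^ 2) := by
    linear_combination (cos θ ^ 2 + sin θ ^ 2 + 1) * cos_sq_add_sin_sq θ
  have hsin : sin (4 * (2 * π)) = 0 := by
    rw [← mul_assoc]
    exact_mod_cast sin_nat_mul_pi (4 * 2)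
  have hint : IntervalIntegrable (fun θ : ℝ => 2 * (sin θ ^ 2 * cos θ ^ 2)) volume 0 (2 * π) :=
    Continuous.intervalIntegrable (by fun_prop) _ _
  simp only [integral_angleUniform, expand]
  rw [intervalIntegral.integral_sub intervalIntegrable_const hint,
    intervalIntegral.integral_const_mul, integral_sin_sq_mul_cos_sq, hsin,
    intervalIntegral.integral_const, mul_zero, sin_zero, smul_eq_mul]
  field

end UniformAngle

section UniformPair

variable (d : ℕ)

lemma setOf_fst_ne_snd_eq_offDiag :
    {p : Fin d × Fin d | p.1 ≠ p.2} = ((Finset.univ : Finset (Fin d)).offDiag : Set _) := by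
  ext p
  simp

instance isZeroOrProbabilityMeasure_pairUniform :
    IsZeroOrProbabilityMeasure (pairUniform d) := by
  have h : ((d * (d - 1) : ℕ) : ℝ≥0∞) =
      Measure.count.restrict {p : Fin d × Fin d | p.1 ≠ p.2} Set.univ := by
    rw [Measure.restrict_apply_univ, setOf_fst_ne_snd_eq_offDiag, Measure.count_apply_finset,
      Finset.offDiag_card, Finset.card_univ, Fintype.card_fin, Nat.mul_sub_one]
  rw [pairUniform, h]
  infer_instance

lemma lintegral_pairUniform (f : Fin d × Fin d → ℝ≥0∞) :
    ∫⁻ p, f p ∂pairUniform d =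
      ((d * (d - 1) : ℕ) : ℝ≥0∞)⁻¹ * ∑ p ∈ (Finset.univ : Finset (Fin d)).offDiag, f p := by
  rw [pairUniform, lintegral_smul_measure, smul_eq_mul, setOf_fst_ne_snd_eq_offDiag,
    lintegral_finset]
  simp

lemma ae_fst_ne_snd_kacParam : ∀ᵐ p ∂kacParam d, p.1.1 ≠ p.1.2 :=
  Measure.quasiMeasurePreserving_fst.ae <|
    Measure.ae_smul_measure (ae_restrict_mem (.of_discrete)) _

lemma lintegral_kacParam {f : (Fin d × Fin d) × ℝ → ℝ≥0∞} (hf : Measurable f) :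
    ∫⁻ p, f p ∂kacParam d = ∫⁻ q, ∫⁻ θ, f (q, θ) ∂angleUniform ∂pairUniform d :=
  lintegral_prod f hf.aemeasurable

instance isZeroOrProbabilityMeasure_kacParam : IsZeroOrProbabilityMeasure (kacParam d) :=
  isZeroOrProbabilityMeasure_prod _ _

end UniformPair

section MatrixMeasurability

variable {α m n o : Type*} [MeasurableSpace α]

lemma measurable_matrix_iff {A : α → Matrix m n ℝ} :
    Measurable A ↔ ∀ i j, Measurable fun a => A a i j :=
  measurable_pi_iff.trans (forall_congr' fun _ => measurable_pi_iff)

lemma measurable_matrix_mul [Fintype n] {A : α → Matrix m n ℝ} {B : α → Matrix n o ℝ}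
    (hA : Measurable A) (hB : Measurable B) : Measurable fun a => A a * B a := by
  rw [measurable_matrix_iff] at hA hB ⊢
  intro i j
  simp only [Matrix.mul_apply]
  fun_prop

lemma measurable_mulVec [Fintype n] {A : α → Matrix m n ℝ} {x : α → n → ℝ}
    (hA : Measurable A) (hx : Measurable x) : Measurable fun a => A a *ᵥ x a := by
  rw [measurable_matrix_iff] at hA
  rw [measurable_pi_iff] at hx ⊢
  intro i
  simp only [Matrix.mulVec, dotProduct]
  fun_prop

end MatrixMeasurability

section KacRecursion

variable {d : ℕ}

lemma measurable_rotM :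
    Measurable fun p : (Fin d × Fin d) × ℝ => rotM d p.1.1 p.1.2 p.2 := by
  refine measurable_from_prod_countable_right fun q => measurable_matrix_iff.2 fun k l => ?_
  simp only [rotM, Matrix.of_apply]
  split_ifs <;> fun_prop

lemma kacMatrix_succ {T : ℕ} (ω : Fin (T + 1) → (Fin d × Fin d) × ℝ) :
    kacMatrix ω = kacMatrix (Fin.tail ω) * rotM d (ω 0).1.1 (ω 0).1.2 (ω 0).2 := by
  simp [kacMatrix, List.ofFn_succ, Fin.tail]

lemma measurable_kacMatrix (T : ℕ) :
    Measurable (kacMatrix : (Fin T → (Fin d × Fin d) × ℝ) → Matrix (Fin d) (Fin d) ℝ) := by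
  induction T with
  | zero => exact Subsingleton.measurable
  | succ T ih =>
    simp only [funext kacMatrix_succ]
    exact measurable_matrix_mul (ih.comp (by unfold Fin.tail; fun_prop))
      (measurable_rotM.comp (measurable_pi_apply 0))

instance isZeroOrProbabilityMeasure_kacMeasure (T : ℕ) :
    IsZeroOrProbabilityMeasure (kacMeasure d T) := by
  unfold kacMeasure
  infer_instance

lemma lintegral_kacMeasure_zero {f : Matrix (Fin d) (Fin d) ℝ → ℝ≥0∞} (hf : Measurable f) :
    ∫⁻ Q, f Q ∂kacMeasure d 0 = f 1 := by
  rw [kacMeasure, lintegral_map hf (measurable_kacMatrix 0)]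
  simp [kacMatrix]

lemma lintegral_kacMeasure_succ (T : ℕ) {f : Matrix (Fin d) (Fin d) ℝ → ℝ≥0∞}
    (hf : Measurable f) :
    ∫⁻ Q, f Q ∂kacMeasure d (T + 1) =
      ∫⁻ p, ∫⁻ Q, f (Q * rotM d p.1.1 p.1.2 p.2) ∂kacMeasure d T ∂kacParam d := by
  have hpair : Measurable fun q : ((Fin d × Fin d) × ℝ) × (Fin T → (Fin d × Fin d) × ℝ) =>
      f (kacMatrix q.2 * rotM d q.1.1.1 q.1.1.2 q.1.2) :=
    hf.comp (measurable_matrix_mul ((measurable_kacMatrix T).comp measurable_snd)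
      (measurable_rotM.comp measurable_fst))
  have hstep (p : (Fin d × Fin d) × ℝ) :
      Measurable fun Q => f (Q * rotM d p.1.1 p.1.2 p.2) :=
    hf.comp (measurable_matrix_mul measurable_id measurable_const)
  simp only [kacMeasure, lintegral_map hf (measurable_kacMatrix _),
    lintegral_map (hstep _) (measurable_kacMatrix _), kacMatrix_succ]
  rw [← lintegral_prod _ hpair.aemeasurable]
  exact (measurePreserving_piFinSuccAbove (fun _ => kacParam d) 0).lintegral_comp hpair

end KacRecursion

section PlaneRotation

variable {d : ℕ} {i j : Fin d}

lemma rotM_mulVec (hij : i ≠ j) (θ : ℝ) (x : Fin d → ℝ) :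
    rotM d i j θ *ᵥ x = fun k => if k = i then x i * cos θ - x j * sin θ
      else if k = j then x i * sin θ + x j * cos θ else x k := by
  funext k
  simp only [Matrix.mulVec, dotProduct, rotM, Matrix.of_apply]
  rcases eq_or_ne k i with rfl | hi
  · rw [Fintype.sum_eq_add k j hij fun l hl => by simp [hij, hl.1, hl.2, hl.1.symm]]
    simp only [and_self, ↓reduceIte, hij.symm, and_false, neg_mul]
    ring
  rcases eq_or_ne k j with rfl | hj
  · rw [Fintype.sum_eq_add i k hij fun l hl => by simp [hi, hl.1, hl.2, hl.2.symm]]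
    simp only [hi, and_true, ↓reduceIte, hij, and_self, and_false]
    ring
  · rw [Fintype.sum_eq_single k fun l hl => by simp [hi, hj, hl.symm]]
    simp [hi, hj]

lemma rotM_transpose (hij : i ≠ j) (θ : ℝ) : (rotM d i j θ)ᵀ = rotM d i j (-θ) := by
  ext k l
  simp only [rotM, Matrix.transpose_apply, Matrix.of_apply, cos_neg, sin_neg]
  grind

lemma rotM_mul_rotM_neg (hij : i ≠ j) (θ : ℝ) : rotM d i j θ * rotM d i j (-θ) = 1 := by
  refine Matrix.ext_of_mulVec_single fun l => ?_
  rw [← Matrix.mulVec_mulVec, rotM_mulVec hij, rotM_mulVec hij, Matrix.one_mulVec, cos_neg,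
    sin_neg]
  have := sin_sq_add_cos_sq θ
  funext k
  grind

lemma rotM_mem_orthogonalGroup (hij : i ≠ j) (θ : ℝ) :
    rotM d i j θ ∈ Matrix.orthogonalGroup (Fin d) ℝ := by
  rw [Matrix.mem_orthogonalGroup_iff, rotM_transpose hij, rotM_mul_rotM_neg hij]

lemma kacMatrix_mem_orthogonalGroup {T : ℕ} {ω : Fin T → (Fin d × Fin d) × ℝ}
    (hω : ∀ t, (ω t).1.1 ≠ (ω t).1.2) : kacMatrix ω ∈ Matrix.orthogonalGroup (Fin d) ℝ := by
  refine list_prod_mem fun A hA => ?_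
  obtain ⟨t, rfl⟩ := List.mem_ofFn.1 (List.mem_reverse.1 hA)
  exact rotM_mem_orthogonalGroup (hω t) _

lemma sum_sq_row_eq_one_of_mem_orthogonalGroup {n : Type*} [Fintype n] [DecidableEq n]
    {Q : Matrix n n ℝ} (hQ : Q ∈ Matrix.orthogonalGroup n ℝ) (i : n) :
    ∑ k, Q i k ^ 2 = 1 := by
  have h := congrFun (congrFun ((Matrix.mem_orthogonalGroup_iff n ℝ).1 hQ) i) i
  simpa [Matrix.mul_apply, ← sq] using h

lemma ae_kacMeasure_sum_sq_row_eq_one (d T : ℕ) :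
    ∀ᵐ Q ∂kacMeasure d T, ∀ i, ∑ k, Q i k ^ 2 = 1 := by
  have hmeas : MeasurableSet {Q : Matrix (Fin d) (Fin d) ℝ | ∀ i, ∑ k, Q i k ^ 2 = 1} := by
    have hentry := measurable_matrix_iff.1 (measurable_id (α := Matrix (Fin d) (Fin d) ℝ))
    simp only [id_eq] at hentry
    measurability
  refine (ae_map_iff (measurable_kacMatrix T).aemeasurable hmeas).2 ?_
  have hdistinct : ∀ᵐ ω ∂Measure.pi fun _ : Fin T => kacParam d, ∀ t, (ω t).1.1 ≠ (ω t).1.2 :=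
    ae_all_iff.2 fun t => (Measure.tendsto_eval_ae_ae (μ := fun _ : Fin T => kacParam d)
      (i := t)).eventually (ae_fst_ne_snd_kacParam d)
  filter_upwards [hdistinct] with ω hω
  exact sum_sq_row_eq_one_of_mem_orthogonalGroup (kacMatrix_mem_orthogonalGroup hω)

end PlaneRotation

section PolarUpdate

/-- The vector obtained from `x` by replacing its projection to the `(i, j)` coordinate plane by
the point of the same norm at polar angle `θ`. Resampling the plane by this absolute angle, instead
of rotating by a relative one, lets two vectors be updated with a common angle. -/
def polarUpdate {d : ℕ} (i j : Fin d) (x : Fin d → ℝ) (θ : ℝ) : Fin d → ℝ :=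
  fun k => if k = i then √(x i ^ 2 + x j ^ 2) * cos θ
    else if k = j then √(x i ^ 2 + x j ^ 2) * sin θ else x k

variable {d : ℕ} {i j : Fin d}

lemma polarUpdate_sq (x : Fin d → ℝ) (θ : ℝ) (k : Fin d) :
    polarUpdate i j x θ k ^ 2 = if k = i then (x i ^ 2 + x j ^ 2) * cos θ ^ 2
      else if k = j then (x i ^ 2 + x j ^ 2) * sin θ ^ 2 else x k ^ 2 := by
  have h : √(x i ^ 2 + x j ^ 2) ^ 2 = x i ^ 2 + x j ^ 2 := sq_sqrt (by positivity)
  unfold polarUpdate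
  split_ifs <;> simp only [mul_pow, h]

lemma measurable_polarUpdate (x : Fin d → ℝ) :
    Measurable fun p : (Fin d × Fin d) × ℝ => polarUpdate p.1.1 p.1.2 x p.2 := by
  refine measurable_from_prod_countable_right fun q => measurable_pi_iff.2 fun k => ?_
  simp only [polarUpdate]
  split_ifs <;> fun_prop

lemma exists_rotM_mulVec_eq_polarUpdate (hij : i ≠ j) (x : Fin d → ℝ) :
    ∃ a, ∀ θ, rotM d i j θ *ᵥ x = polarUpdate i j x (θ + a) := by
  let z : ℂ := ⟨x i, x j⟩
  have hnorm : ‖z‖ = √(x i ^ 2 + x j ^ 2) := by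
    rw [Complex.norm_def, Complex.normSq_mk, sq, sq]
  have hre : √(x i ^ 2 + x j ^ 2) * cos z.arg = x i := hnorm ▸ Complex.norm_mul_cos_arg z
  have him : √(x i ^ 2 + x j ^ 2) * sin z.arg = x j := hnorm ▸ Complex.norm_mul_sin_arg z
  refine ⟨z.arg, fun θ => ?_⟩
  have hi : √(x i ^ 2 + x j ^ 2) * cos (θ + z.arg) = x i * cos θ - x j * sin θ := by
    rw [cos_add]
    linear_combination cos θ * hre - sin θ * him
  have hj : √(x i ^ 2 + x j ^ 2) * sin (θ + z.arg) = x i * sin θ + x j * cos θ := by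
    rw [sin_add]
    linear_combination sin θ * hre + cos θ * him
  funext k
  simp only [rotM_mulVec hij, polarUpdate, hi, hj]

lemma lintegral_rotM_mulVec_kacParam {F : (Fin d → ℝ) → ℝ≥0∞} (hF : Measurable F)
    (x : Fin d → ℝ) :
    ∫⁻ p, F (rotM d p.1.1 p.1.2 p.2 *ᵥ x) ∂kacParam d =
      ∫⁻ p, F (polarUpdate p.1.1 p.1.2 x p.2) ∂kacParam d := by
  have hrot : Measurable fun p : (Fin d × Fin d) × ℝ => F (rotM d p.1.1 p.1.2 p.2 *ᵥ x) :=
    hF.comp (measurable_mulVec measurable_rotM measurable_const)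
  have hpol : Measurable fun p : (Fin d × Fin d) × ℝ => F (polarUpdate p.1.1 p.1.2 x p.2) :=
    hF.comp (measurable_polarUpdate x)
  rw [lintegral_kacParam d hrot, lintegral_kacParam d hpol, lintegral_pairUniform,
    lintegral_pairUniform]
  congr 1
  refine Finset.sum_congr rfl fun q hq => ?_
  obtain ⟨a, ha⟩ := exists_rotM_mulVec_eq_polarUpdate (Finset.mem_offDiag.1 hq).2.2 x
  simp only [ha]
  refine lintegral_angleUniform_add (F := fun θ => F (polarUpdate q.1 q.2 x θ)) (fun θ => ?_) a
  refine congrArg F (funext fun k => ?_)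
  simp only [polarUpdate, cos_add_two_pi, sin_add_two_pi]

end PolarUpdate

section MixedEnergy

variable {ι : Type*} [Fintype ι]

lemma sum_sub_sum_eq_of_eq_off_pair {M : Type*} [AddCommGroup M] {f g : ι → M} {i j : ι}
    (hij : i ≠ j) (h : ∀ k, k ≠ i ∧ k ≠ j → f k = g k) :
    ∑ k, f k - ∑ k, g k = (f i - g i) + (f j - g j) := by
  classical
  rw [← Finset.sum_sub_distrib]
  exact Fintype.sum_eq_add i j hij fun k hk => sub_eq_zero.2 (h k hk)

/-- The mean of `∑ k, v k ^ 2`, where `v` is `u` with its entries at `i ≠ j` replaced by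
`(u i + u j) * cos θ ^ 2` and `(u i + u j) * sin θ ^ 2` for a uniform angle `θ`. -/
def mixedEnergy (u : ι → ℝ) (i j : ι) : ℝ :=
  ∑ k, u k ^ 2 - u i ^ 2 - u j ^ 2 + 3 / 4 * (u i + u j) ^ 2

lemma mixedEnergy_nonneg (u : ι → ℝ) {i j : ι} (hij : i ≠ j) :
    0 ≤ mixedEnergy u i j := by
  classical
  have h : u i ^ 2 + u j ^ 2 ≤ ∑ k, u k ^ 2 := by
    rw [← Finset.sum_pair hij (f := fun k => u k ^ 2)]
    exact Finset.sum_le_univ_sum_of_nonneg fun k => sq_nonneg _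
  rw [mixedEnergy]
  linarith [sq_nonneg (u i + u j)]

lemma sum_offDiag_mixedEnergy {u : ι → ℝ} (hu : ∑ k, u k = 0) :
    ∑ p ∈ (Finset.univ : Finset ι).offDiag, mixedEnergy u p.1 p.2 =
      ((Fintype.card ι : ℝ) ^ 2 - 3 / 2 * Fintype.card ι - 1) * ∑ k, u k ^ 2 := by
  classical
  have hdiag : ∑ p ∈ (Finset.univ : Finset ι).diag, mixedEnergy u p.1 p.2 =
      (Fintype.card ι + 1) * ∑ k, u k ^ 2 := by
    have expand (i : ι) : mixedEnergy u i i = ∑ k, u k ^ 2 + u i ^ 2 := by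
      rw [mixedEnergy]
      ring
    simp only [Finset.sum_diag, expand, Finset.sum_add_distrib, Finset.sum_const,
      Finset.card_univ, nsmul_eq_mul]
    ring
  have hall : ∑ i, ∑ j, mixedEnergy u i j =
      ((Fintype.card ι : ℝ) ^ 2 - Fintype.card ι / 2) * ∑ k, u k ^ 2 := by
    have expand (i j : ι) : mixedEnergy u i j =
        ∑ k, u k ^ 2 - 1 / 4 * u i ^ 2 - 1 / 4 * u j ^ 2 + 3 / 2 * u i * u j := by
      rw [mixedEnergy]
      ring
    simp only [expand, Finset.sum_add_distrib, Finset.sum_sub_distrib, ← Finset.mul_sum, hu,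
      Finset.sum_const, Finset.card_univ, nsmul_eq_mul, mul_zero]
    ring
  have hsplit : ∑ p ∈ (Finset.univ : Finset ι).diag, mixedEnergy u p.1 p.2 +
      ∑ p ∈ (Finset.univ : Finset ι).offDiag, mixedEnergy u p.1 p.2 =
        ∑ i, ∑ j, mixedEnergy u i j := by
    rw [← Finset.sum_union (Finset.disjoint_diag_offDiag _), Finset.diag_union_offDiag,
      Finset.sum_product]
  linarith

end MixedEnergy

section Contraction

/-- The squared Euclidean distance between the vectors of squared coordinates of `x` and `y`: the
Lyapunov function that contracts when `x` and `y` are updated with a common polar angle. -/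
def sqDiscrepancy {ι : Type*} [Fintype ι] (x y : ι → ℝ) : ℝ := ∑ k, (x k ^ 2 - y k ^ 2) ^ 2

variable {d : ℕ} {i j : Fin d}

lemma sqDiscrepancy_nonneg {ι : Type*} [Fintype ι] (x y : ι → ℝ) : 0 ≤ sqDiscrepancy x y :=
  Finset.sum_nonneg fun _ _ => sq_nonneg _

lemma sum_sq_polarUpdate (hij : i ≠ j) (x : Fin d → ℝ) (θ : ℝ) :
    ∑ k, polarUpdate i j x θ k ^ 2 = ∑ k, x k ^ 2 := by
  rw [← sub_eq_zero, sum_sub_sum_eq_of_eq_off_pair hij fun k hk => by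
    simp only [polarUpdate_sq, hk.1, hk.2, if_false]]
  simp only [polarUpdate_sq, hij.symm, if_true, if_false]
  linear_combination (x i ^ 2 + x j ^ 2) * cos_sq_add_sin_sq θ

lemma sqDiscrepancy_polarUpdate (hij : i ≠ j) (x y : Fin d → ℝ) (θ : ℝ) :
    sqDiscrepancy (polarUpdate i j x θ) (polarUpdate i j y θ) =
      (sqDiscrepancy x y - (x i ^ 2 - y i ^ 2) ^ 2 - (x j ^ 2 - y j ^ 2) ^ 2) +
        ((x i ^ 2 - y i ^ 2) + (x j ^ 2 - y j ^ 2)) ^ 2 * (cos θ ^ 4 + sin θ ^ 4) := by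
  have h := sum_sub_sum_eq_of_eq_off_pair hij
    (f := fun k => (polarUpdate i j x θ k ^ 2 - polarUpdate i j y θ k ^ 2) ^ 2)
    (g := fun k => (x k ^ 2 - y k ^ 2) ^ 2) fun k hk => by
      simp only [polarUpdate_sq, hk.1, hk.2, if_false]
  simp only [polarUpdate_sq, hij.symm, if_true, if_false] at h
  simp only [sqDiscrepancy, polarUpdate_sq]
  linear_combination h

lemma lintegral_sqDiscrepancy_polarUpdate (hij : i ≠ j) (x y : Fin d → ℝ) :
    ∫⁻ θ, ENNReal.ofReal (sqDiscrepancy (polarUpdate i j x θ) (polarUpdate i j y θ))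
        ∂angleUniform =
      ENNReal.ofReal (mixedEnergy (fun k => x k ^ 2 - y k ^ 2) i j) := by
  have hint : Integrable (fun θ => cos θ ^ 4 + sin θ ^ 4) angleUniform :=
    .of_integral_ne_zero (by simp [integral_cos_pow_four_add_sin_pow_four_angleUniform])
  rw [← ofReal_integral_eq_lintegral_ofReal]
  · simp only [sqDiscrepancy_polarUpdate hij]
    rw [integral_add (integrable_const _) (hint.const_mul _), integral_const_mul,
      integral_cos_pow_four_add_sin_pow_four_angleUniform, mixedEnergy, sqDiscrepancy]
    simp [mul_comm]
  · simp only [sqDiscrepancy_polarUpdate hij]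
    exact (integrable_const _).add (hint.const_mul _)
  · exact .of_forall fun θ => sqDiscrepancy_nonneg _ _

lemma measurable_sqDiscrepancy_polarUpdate (x y : Fin d → ℝ) :
    Measurable fun p : (Fin d × Fin d) × ℝ => ENNReal.ofReal
      (sqDiscrepancy (polarUpdate p.1.1 p.1.2 x p.2) (polarUpdate p.1.1 p.1.2 y p.2)) := by
  have hx := measurable_pi_iff.1 (measurable_polarUpdate x)
  have hy := measurable_pi_iff.1 (measurable_polarUpdate y)
  unfold sqDiscrepancy
  fun_prop

lemma sq_sub_three_halves_mul_sub_one_le (n : ℕ) :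
    (n : ℝ) ^ 2 - 3 / 2 * n - 1 ≤ (n * (n - 1) : ℕ) * (1 - 1 / (2 * n)) := by
  rcases n with _ | n
  · norm_num
  · have : ((n + 1 : ℕ) * n : ℝ) * (1 - 1 / (2 * (n + 1 : ℕ))) = n * (n + 1 / 2) := by
      push_cast
      field
    rw [Nat.add_sub_cancel, Nat.cast_mul, this]
    push_cast
    linarith

lemma lintegral_sqDiscrepancy_polarUpdate_kacParam_le {x y : Fin d → ℝ}
    (hxy : ∑ k, x k ^ 2 = ∑ k, y k ^ 2) :
    ∫⁻ p, ENNReal.ofReal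
        (sqDiscrepancy (polarUpdate p.1.1 p.1.2 x p.2) (polarUpdate p.1.1 p.1.2 y p.2))
          ∂kacParam d ≤
      ENNReal.ofReal (1 - 1 / (2 * d)) * ENNReal.ofReal (sqDiscrepancy x y) := by
  set u : Fin d → ℝ := fun k => x k ^ 2 - y k ^ 2
  have hu_sum : ∑ k, u k = 0 := by rw [Finset.sum_sub_distrib, hxy, sub_self]
  have hnonneg (p) (hp : p ∈ (Finset.univ : Finset (Fin d)).offDiag) :
      0 ≤ mixedEnergy u p.1 p.2 := mixedEnergy_nonneg u (Finset.mem_offDiag.1 hp).2.2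
  have hpairs : (∑ p ∈ (Finset.univ : Finset (Fin d)).offDiag,
      ENNReal.ofReal (mixedEnergy u p.1 p.2)) ≤ ((d * (d - 1) : ℕ) : ℝ≥0∞) *
        ENNReal.ofReal ((1 - 1 / (2 * d)) * sqDiscrepancy x y) := by
    rw [← ENNReal.ofReal_sum_of_nonneg hnonneg, sum_offDiag_mixedEnergy hu_sum,
      Fintype.card_fin, ← ENNReal.ofReal_natCast, ← ENNReal.ofReal_mul (Nat.cast_nonneg _)]
    refine ENNReal.ofReal_le_ofReal ?_
    rw [← mul_assoc]
    exact mul_le_mul_of_nonneg_right (sq_sub_three_halves_mul_sub_one_le d)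
      (sqDiscrepancy_nonneg x y)
  rw [lintegral_kacParam d (measurable_sqDiscrepancy_polarUpdate x y), lintegral_pairUniform,
    Finset.sum_congr rfl fun p hp =>
      lintegral_sqDiscrepancy_polarUpdate (Finset.mem_offDiag.1 hp).2.2 x y,
    ← ENNReal.ofReal_mul' (sqDiscrepancy_nonneg x y)]
  calc _ ≤ _ * (((d * (d - 1) : ℕ) : ℝ≥0∞) * _) := mul_le_mul_right hpairs _
    _ ≤ _ := by
      rw [← mul_assoc]
      exact mul_le_of_le_one_left' (ENNReal.inv_mul_le_one _)

lemma lintegral_rotM_mulVec_le_add {F G : (Fin d → ℝ) → ℝ≥0∞} (hF : Measurable F)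
    (hG : Measurable G) {c : ℝ≥0∞}
    (h : ∀ x y : Fin d → ℝ, ∑ k, x k ^ 2 = ∑ k, y k ^ 2 →
      F x ≤ G y + c * ENNReal.ofReal (sqDiscrepancy x y))
    {x y : Fin d → ℝ} (hxy : ∑ k, x k ^ 2 = ∑ k, y k ^ 2) :
    ∫⁻ p, F (rotM d p.1.1 p.1.2 p.2 *ᵥ x) ∂kacParam d ≤
      ∫⁻ p, G (rotM d p.1.1 p.1.2 p.2 *ᵥ y) ∂kacParam d +
        c * ENNReal.ofReal (1 - 1 / (2 * d)) * ENNReal.ofReal (sqDiscrepancy x y) := by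
  rw [lintegral_rotM_mulVec_kacParam hF, lintegral_rotM_mulVec_kacParam hG, mul_assoc]
  have hGpol : Measurable fun p : (Fin d × Fin d) × ℝ => G (polarUpdate p.1.1 p.1.2 y p.2) :=
    hG.comp (measurable_polarUpdate y)
  calc
    _ ≤ ∫⁻ p, (G (polarUpdate p.1.1 p.1.2 y p.2) + c * ENNReal.ofReal
        (sqDiscrepancy (polarUpdate p.1.1 p.1.2 x p.2) (polarUpdate p.1.1 p.1.2 y p.2)))
          ∂kacParam d := by
      refine lintegral_mono_ae ?_
      filter_upwards [ae_fst_ne_snd_kacParam d] with p hp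
      exact h _ _ (by rw [sum_sq_polarUpdate hp, sum_sq_polarUpdate hp, hxy])
    _ ≤ _ := by
      rw [lintegral_add_left hGpol,
        lintegral_const_mul c (measurable_sqDiscrepancy_polarUpdate x y)]
      gcongr
      exact lintegral_sqDiscrepancy_polarUpdate_kacParam_le hxy

theorem lintegral_kacMeasure_mulVec_le_add {f g : (Fin d → ℝ) → ℝ≥0∞} (hf : Measurable f)
    (hg : Measurable g) {c : ℝ≥0∞}
    (h : ∀ x y : Fin d → ℝ, ∑ k, x k ^ 2 = ∑ k, y k ^ 2 →
      f x ≤ g y + c * ENNReal.ofReal (sqDiscrepancy x y))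
    (T : ℕ) {x y : Fin d → ℝ} (hxy : ∑ k, x k ^ 2 = ∑ k, y k ^ 2) :
    ∫⁻ Q, f (Q *ᵥ x) ∂kacMeasure d T ≤
      ∫⁻ Q, g (Q *ᵥ y) ∂kacMeasure d T +
        c * ENNReal.ofReal (1 - 1 / (2 * d)) ^ T * ENNReal.ofReal (sqDiscrepancy x y) := by
  have hmeas {F : (Fin d → ℝ) → ℝ≥0∞} (hF : Measurable F) (z : Fin d → ℝ) :
      Measurable fun Q : Matrix (Fin d) (Fin d) ℝ => F (Q *ᵥ z) :=
    hF.comp (measurable_mulVec measurable_id measurable_const)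
  have hmean {F : (Fin d → ℝ) → ℝ≥0∞} (hF : Measurable F) (T : ℕ) :
      Measurable fun z => ∫⁻ Q, F (Q *ᵥ z) ∂kacMeasure d T := by
    have hjoint : Measurable fun p : (Fin d → ℝ) × Matrix (Fin d) (Fin d) ℝ => F (p.2 *ᵥ p.1) :=
      hF.comp (measurable_mulVec measurable_snd measurable_fst)
    exact hjoint.lintegral_prod_right
  induction T generalizing x y with
  | zero =>
    simpa [lintegral_kacMeasure_zero (hmeas hf x), lintegral_kacMeasure_zero (hmeas hg y)]
      using h x y hxy
  | succ T ih =>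
    simp only [lintegral_kacMeasure_succ T (hmeas hf x), lintegral_kacMeasure_succ T (hmeas hg y),
      ← Matrix.mulVec_mulVec, pow_succ, ← mul_assoc]
    exact lintegral_rotM_mulVec_le_add (hmean hf T) (hmean hg T) (fun x y hxy => ih hxy) hxy

end Contraction

section SignVector

/-- The symmetric distribution on `{r, -r}`; a product of copies of it is the law of a uniformly
random sign vector scaled by `r`. -/
def twoPoint (r : ℝ) : Measure ℝ :=
  (2⁻¹ : ℝ≥0∞) • (Measure.dirac r + Measure.dirac (-r))

instance isProbabilityMeasure_twoPoint (r : ℝ) : IsProbabilityMeasure (twoPoint r) where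
  measure_univ := by
    simp [twoPoint, ENNReal.inv_two_add_inv_two]

lemma ae_twoPoint_iff {r : ℝ} {p : ℝ → Prop} : (∀ᵐ x ∂twoPoint r, p x) ↔ p r ∧ p (-r) := by
  simp [twoPoint, ae_add_measure_iff]

lemma integral_id_twoPoint (r : ℝ) : ∫ x, id x ∂twoPoint r = 0 := by
  rw [twoPoint, integral_smul_measure, integral_add_measure (integrable_dirac (by simp))
    (integrable_dirac (by simp)), integral_dirac, integral_dirac]
  simp

lemma hasSubgaussianMGF_id_twoPoint (r : ℝ) : HasSubgaussianMGF id (‖r‖₊ ^ 2) (twoPoint r) := by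
  have hmem : ∀ᵐ x ∂twoPoint r, id x ∈ Set.Icc (-|r|) |r| :=
    ae_twoPoint_iff.2 ⟨abs_le.1 le_rfl, abs_le.1 (abs_neg r).le⟩
  have h := hasSubgaussianMGF_of_mem_Icc_of_integral_eq_zero aemeasurable_id hmem
    (integral_id_twoPoint r)
  have hradius : ‖|r| - -|r|‖₊ / 2 = ‖r‖₊ := by
    ext
    simp [← two_mul]
  rwa [hradius] at h

variable {ι : Type*} [Fintype ι]

lemma ae_pi_twoPoint_sq_eq (ι : Type*) [Fintype ι] (r : ℝ) :
    ∀ᵐ y ∂Measure.pi fun _ : ι => twoPoint r, ∀ k, y k ^ 2 = r ^ 2 :=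
  ae_all_iff.2 fun k => (Measure.tendsto_eval_ae_ae (μ := fun _ : ι => twoPoint r)
    (i := k)).eventually (ae_twoPoint_iff (p := fun x => x ^ 2 = r ^ 2) |>.2 ⟨rfl, neg_sq r⟩)

lemma hasSubgaussianMGF_sum_mul_pi {μ : ι → Measure ℝ} [∀ k, IsProbabilityMeasure (μ k)]
    {c : ι → ℝ≥0} (h : ∀ k, HasSubgaussianMGF id (c k) (μ k)) (a : ι → ℝ) :
    HasSubgaussianMGF (fun y => ∑ k, a k * y k) (∑ k, ‖a k‖₊ ^ 2 * c k) (Measure.pi μ) := by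
  refine HasSubgaussianMGF.sum_of_iIndepFun
    (iIndepFun_pi (X := fun k y => a k * y) fun k => by fun_prop) fun k _ => ?_
  have heval : HasSubgaussianMGF (fun y => y k) (c k) (Measure.pi μ) := by
    refine (HasSubgaussianMGF.id_map_iff (measurable_pi_apply k).aemeasurable).1 ?_
    exact (measurePreserving_eval μ k).map_eq.symm ▸ h k
  convert heval.const_mul (a k) using 2
  ext
  simp only [NNReal.coe_mul, NNReal.coe_pow, coe_nnnorm, norm_eq_abs, sq_abs]
  rfl

lemma measure_le_sq_le_of_hasSubgaussianMGF {Ω : Type*} [MeasurableSpace Ω] {μ : Measure Ω}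
    [IsFiniteMeasure μ] {X : Ω → ℝ} {c : ℝ≥0} (h : HasSubgaussianMGF X c μ) {s : ℝ}
    (hs : 0 ≤ s) : μ {ω | s ≤ X ω ^ 2} ≤ ENNReal.ofReal (2 * exp (-s / (2 * c))) := by
  have hsub : {ω | s ≤ X ω ^ 2} ⊆ {ω | √s ≤ X ω} ∪ {ω | √s ≤ (-X) ω} := fun ω hω =>
    le_abs.1 (sqrt_le_iff.2 ⟨abs_nonneg _, (sq_abs (X ω)).symm ▸ hω⟩)
  rw [← ofReal_measureReal]
  refine ENNReal.ofReal_le_ofReal ?_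
  calc μ.real {ω | s ≤ X ω ^ 2}
      ≤ μ.real {ω | √s ≤ X ω} + μ.real {ω | √s ≤ (-X) ω} :=
        (measureReal_mono hsub).trans (measureReal_union_le _ _)
    _ ≤ exp (-√s ^ 2 / (2 * c)) + exp (-√s ^ 2 / (2 * c)) :=
        add_le_add (h.measure_ge_le (sqrt_nonneg s)) (h.neg.measure_ge_le (sqrt_nonneg s))
    _ = 2 * exp (-s / (2 * c)) := by rw [sq_sqrt hs, ← two_mul]

lemma measure_pi_twoPoint_le_sq_sum_mul_le (r : ℝ) (a : ι → ℝ) {s : ℝ} (hs : 0 ≤ s) :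
    (Measure.pi fun _ : ι => twoPoint r) {y | s ≤ (∑ k, a k * y k) ^ 2} ≤
      ENNReal.ofReal (2 * exp (-s / (2 * (r ^ 2 * ∑ k, a k ^ 2)))) := by
  have h := measure_le_sq_le_of_hasSubgaussianMGF
    (hasSubgaussianMGF_sum_mul_pi (fun _ => hasSubgaussianMGF_id_twoPoint r) a) hs
  simpa [← Finset.mul_sum, mul_comm] using h

end SignVector

section ColumnTail

variable {d : ℕ}

lemma measurableSet_exists_le_sq {ι : Type*} [Countable ι] (s : ℝ) :
    MeasurableSet {x : ι → ℝ | ∃ i, s ≤ x i ^ 2} := by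
  rw [Set.ofPred_exists]
  exact .iUnion fun i => measurableSet_le measurable_const (by fun_prop)

lemma indicator_exists_add_le_sq_le {ι : Type*} [Fintype ι] (a : ℝ) {δ : ℝ} (hδ : 0 < δ)
    (x y : ι → ℝ) :
    {z : ι → ℝ | ∃ i, a + δ ≤ z i ^ 2}.indicator (1 : (ι → ℝ) → ℝ≥0∞) x ≤
      {z : ι → ℝ | ∃ i, a ≤ z i ^ 2}.indicator 1 y +
        ENNReal.ofReal (δ ^ 2)⁻¹ * ENNReal.ofReal (sqDiscrepancy x y) := by
  by_cases hx : x ∈ {z : ι → ℝ | ∃ i, a + δ ≤ z i ^ 2}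
  swap
  · rw [Set.indicator_of_notMem hx]
    exact zero_le
  rw [Set.indicator_of_mem hx]
  obtain ⟨i, hi⟩ := hx
  by_cases hy : y ∈ {z : ι → ℝ | ∃ i, a ≤ z i ^ 2}
  · rw [Set.indicator_of_mem hy]
    exact le_self_add
  have hyi : y i ^ 2 < a := not_le.1 fun h => hy ⟨i, h⟩
  refine le_add_left ?_
  rw [← ENNReal.ofReal_mul (by positivity), Pi.one_apply, ENNReal.one_le_ofReal,
    le_inv_mul_iff₀ (by positivity), mul_one]
  calc δ ^ 2 ≤ (x i ^ 2 - y i ^ 2) ^ 2 := by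
        gcongr
        linarith
    _ ≤ sqDiscrepancy x y :=
        Finset.single_le_sum (f := fun k => (x k ^ 2 - y k ^ 2) ^ 2)
          (fun _ _ => sq_nonneg _) (Finset.mem_univ i)

lemma kacMeasure_exists_add_le_sq_mulVec_le_add (T : ℕ) (a : ℝ) {δ : ℝ} (hδ : 0 < δ)
    {x y : Fin d → ℝ} (hxy : ∑ k, x k ^ 2 = ∑ k, y k ^ 2) :
    kacMeasure d T {Q | ∃ i, a + δ ≤ (Q *ᵥ x) i ^ 2} ≤
      kacMeasure d T {Q | ∃ i, a ≤ (Q *ᵥ y) i ^ 2} +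
        ENNReal.ofReal (δ ^ 2)⁻¹ * ENNReal.ofReal (1 - 1 / (2 * d)) ^ T *
          ENNReal.ofReal (sqDiscrepancy x y) := by
  have hset (s : ℝ) (z : Fin d → ℝ) :
      ∫⁻ Q, {v : Fin d → ℝ | ∃ i, s ≤ v i ^ 2}.indicator 1 (Q *ᵥ z) ∂kacMeasure d T =
        kacMeasure d T {Q | ∃ i, s ≤ (Q *ᵥ z) i ^ 2} :=
    lintegral_indicator_one
      (measurable_mulVec measurable_id measurable_const (measurableSet_exists_le_sq s))
  have hmeas (s : ℝ) : Measurable ({v : Fin d → ℝ | ∃ i, s ≤ v i ^ 2}.indicator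
      (1 : (Fin d → ℝ) → ℝ≥0∞)) :=
    measurable_one.indicator (measurableSet_exists_le_sq s)
  rw [← hset, ← hset]
  exact lintegral_kacMeasure_mulVec_le_add (hmeas _) (hmeas _)
    (fun x y _ => indicator_exists_add_le_sq_le a hδ x y) T hxy

lemma sqDiscrepancy_of_sq_eq_inv_card {ι : Type*} [Fintype ι] {x y : ι → ℝ}
    (hx : ∑ k, x k ^ 2 = 1) (hy : ∀ k, y k ^ 2 = (Fintype.card ι : ℝ)⁻¹) :
    sqDiscrepancy x y = ∑ k, x k ^ 4 - (Fintype.card ι : ℝ)⁻¹ := by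
  have hcard : (Fintype.card ι : ℝ) ≠ 0 := fun h => by
    have : IsEmpty ι := Fintype.card_eq_zero_iff.1 (by exact_mod_cast h)
    simp at hx
  have expand (k : ι) : (x k ^ 2 - (Fintype.card ι : ℝ)⁻¹) ^ 2 =
      x k ^ 4 - 2 * (Fintype.card ι : ℝ)⁻¹ * x k ^ 2 + (Fintype.card ι : ℝ)⁻¹ ^ 2 := by ring
  simp only [sqDiscrepancy, hy, expand, Finset.sum_add_distrib, Finset.sum_sub_distrib,
    ← Finset.mul_sum, hx, Finset.sum_const, Finset.card_univ, nsmul_eq_mul]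
  field

lemma measure_pi_twoPoint_exists_le_sq_mulVec_le {m n : Type*} [Fintype m] [Fintype n] (r : ℝ)
    {Q : Matrix m n ℝ} (hQ : ∀ i, ∑ k, Q i k ^ 2 = 1) {a : ℝ} (ha : 0 ≤ a) :
    (Measure.pi fun _ : n => twoPoint r) {y | ∃ i, a ≤ (Q *ᵥ y) i ^ 2} ≤
      ENNReal.ofReal (Fintype.card m * (2 * exp (-a / (2 * r ^ 2)))) := by
  rw [Set.ofPred_exists, ENNReal.ofReal_mul (Nat.cast_nonneg _), ENNReal.ofReal_natCast]
  calc _ ≤ ∑ _i : m, ENNReal.ofReal (2 * exp (-a / (2 * r ^ 2))) := by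
        refine (measure_iUnion_fintype_le _ _).trans (Finset.sum_le_sum fun i _ => ?_)
        simpa [hQ i, Matrix.mulVec, dotProduct]
          using measure_pi_twoPoint_le_sq_sum_mul_le r (Q i) ha
    _ = _ := by simp

lemma lintegral_kacMeasure_exists_le_sq_mulVec_twoPoint_le (T : ℕ) (r : ℝ) {a : ℝ}
    (ha : 0 ≤ a) :
    ∫⁻ y, kacMeasure d T {Q | ∃ i, a ≤ (Q *ᵥ y) i ^ 2} ∂(Measure.pi fun _ => twoPoint r) ≤
      ENNReal.ofReal (d * (2 * exp (-a / (2 * r ^ 2)))) := by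
  let S : Set ((Fin d → ℝ) × Matrix (Fin d) (Fin d) ℝ) := {p | ∃ i, a ≤ (p.2 *ᵥ p.1) i ^ 2}
  have hS : MeasurableSet S :=
    measurable_mulVec measurable_snd measurable_fst (measurableSet_exists_le_sq a)
  calc ∫⁻ y, kacMeasure d T {Q | ∃ i, a ≤ (Q *ᵥ y) i ^ 2} ∂(Measure.pi fun _ => twoPoint r)
      = ∫⁻ Q, (Measure.pi fun _ => twoPoint r) {y | ∃ i, a ≤ (Q *ᵥ y) i ^ 2}
          ∂kacMeasure d T := (Measure.prod_apply hS).symm.trans (Measure.prod_apply_symm hS)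
    _ ≤ ∫⁻ _, ENNReal.ofReal (d * (2 * exp (-a / (2 * r ^ 2)))) ∂kacMeasure d T := by
      refine lintegral_mono_ae ?_
      filter_upwards [ae_kacMeasure_sum_sq_row_eq_one d T] with Q hQ
      simpa using measure_pi_twoPoint_exists_le_sq_mulVec_le r hQ ha
    _ ≤ _ := by
      rw [lintegral_const]
      exact mul_le_of_le_one_right' prob_le_one

theorem kacMeasure_exists_add_le_sq_mulVec_le (T : ℕ) {x : Fin d → ℝ} (hx : ∑ k, x k ^ 2 = 1)
    {a δ : ℝ} (ha : 0 ≤ a) (hδ : 0 < δ) :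
    kacMeasure d T {Q | ∃ i, a + δ ≤ (Q *ᵥ x) i ^ 2} ≤
      ENNReal.ofReal (d * (2 * exp (-(d * a) / 2))) +
        ENNReal.ofReal (δ ^ 2)⁻¹ * ENNReal.ofReal (1 - 1 / (2 * d)) ^ T *
          ENNReal.ofReal (∑ k, x k ^ 4 - (d : ℝ)⁻¹) := by
  set C := ENNReal.ofReal (δ ^ 2)⁻¹ * ENNReal.ofReal (1 - 1 / (2 * d)) ^ T *
    ENNReal.ofReal (∑ k, x k ^ 4 - (d : ℝ)⁻¹) with hC
  let ν : Measure (Fin d → ℝ) := Measure.pi fun _ => twoPoint (√d)⁻¹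
  have hr : (√d)⁻¹ ^ 2 = (d : ℝ)⁻¹ := by rw [inv_pow, sq_sqrt (Nat.cast_nonneg d)]
  have hd : (d : ℝ) ≠ 0 := by
    rintro hd
    obtain rfl : d = 0 := by exact_mod_cast hd
    simp at hx
  calc kacMeasure d T {Q | ∃ i, a + δ ≤ (Q *ᵥ x) i ^ 2}
      = ∫⁻ _, kacMeasure d T {Q | ∃ i, a + δ ≤ (Q *ᵥ x) i ^ 2} ∂ν := by simp
    _ ≤ ∫⁻ y, (kacMeasure d T {Q | ∃ i, a ≤ (Q *ᵥ y) i ^ 2} + C) ∂ν := by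
      refine lintegral_mono_ae ?_
      filter_upwards [ae_pi_twoPoint_sq_eq (Fin d) (√d)⁻¹] with y hy
      rw [hr] at hy
      have hxy : ∑ k, x k ^ 2 = ∑ k, y k ^ 2 := by simp [hx, hy, hd]
      have h := kacMeasure_exists_add_le_sq_mulVec_le_add T a hδ hxy
      rwa [sqDiscrepancy_of_sq_eq_inv_card hx (by simpa using hy), Fintype.card_fin, ← hC] at h
    _ = ∫⁻ y, kacMeasure d T {Q | ∃ i, a ≤ (Q *ᵥ y) i ^ 2} ∂ν + C := by
      simp [lintegral_add_right]
    _ ≤ ENNReal.ofReal (d * (2 * exp (-(d * a) / 2))) + C := by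
      have h := lintegral_kacMeasure_exists_le_sq_mulVec_twoPoint_le (d := d) T (√d)⁻¹ ha
      rw [hr, show -a / (2 * (d : ℝ)⁻¹) = -(d * a) / 2 by field] at h
      gcongr

end ColumnTail

section EntryTail

lemma ofReal_one_sub_pow_le (x : ℝ) (n : ℕ) :
    ENNReal.ofReal (1 - x) ^ n ≤ ENNReal.ofReal (exp (-(n * x))) := by
  rw [← mul_neg, exp_nat_mul, ENNReal.ofReal_pow (exp_nonneg _)]
  gcongr
  exact one_sub_le_exp_neg x

theorem kacMeasure_exists_add_le_sq_entry_le {d : ℕ} (T : ℕ) {a δ : ℝ} (ha : 0 ≤ a)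
    (hδ : 0 < δ) :
    kacMeasure d T {Q | ∃ i j, a + δ ≤ Q i j ^ 2} ≤
      ENNReal.ofReal (d * (d * (2 * exp (-(d * a) / 2)) +
        (δ ^ 2)⁻¹ * exp (-T / (2 * d)) * (1 - (d : ℝ)⁻¹))) := by
  have hcolumn (j : Fin d) : kacMeasure d T {Q | ∃ i, a + δ ≤ Q i j ^ 2} ≤
      ENNReal.ofReal (d * (2 * exp (-(d * a) / 2)) +
        (δ ^ 2)⁻¹ * exp (-T / (2 * d)) * (1 - (d : ℝ)⁻¹)) := by
    have hunit : ∑ k, (Pi.single j 1 : Fin d → ℝ) k ^ 2 = 1 := by simp [Pi.single_apply]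
    have h := kacMeasure_exists_add_le_sq_mulVec_le T hunit ha hδ
    simp only [Matrix.mulVec_single_one, Matrix.col_apply] at h
    refine h.trans ?_
    have hinv : 0 ≤ 1 - (d : ℝ)⁻¹ := sub_nonneg.2 (Nat.cast_inv_le_one d)
    rw [ENNReal.ofReal_add (by positivity) (by positivity)]
    refine add_le_add_right ?_ _
    rw [ENNReal.ofReal_mul (by positivity), ENNReal.ofReal_mul (by positivity)]
    gcongr
    · refine (ofReal_one_sub_pow_le _ _).trans_eq ?_
      congr 2
      ring
    · simp [Pi.single_apply]
  calc kacMeasure d T {Q | ∃ i j, a + δ ≤ Q i j ^ 2}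
      ≤ kacMeasure d T (⋃ j, {Q | ∃ i, a + δ ≤ Q i j ^ 2}) :=
        measure_mono fun _ ⟨i, j, h⟩ => Set.mem_iUnion.2 ⟨j, i, h⟩
    _ ≤ ∑ _j : Fin d, _ :=
        (measure_iUnion_fintype_le _ _).trans (Finset.sum_le_sum fun j _ => hcolumn j)
    _ = _ := by simp [ENNReal.ofReal_mul]

variable {x : ℝ}

lemma sq_mul_exp_eq_rpow_mul_exp (hx : 0 < x) (K : ℝ) :
    x ^ 2 * exp (-(x * ((K ^ 2 - 1) * (log x / x))) / 2) =
      x ^ ((5 : ℝ) / 2) * exp (-(K ^ 2 * log x) / 2) := by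
  have hsq : x ^ 2 = exp (log x * 2) := by rw [← rpow_def_of_pos hx, rpow_two]
  rw [rpow_def_of_pos hx, hsq, ← exp_add, ← exp_add]
  congr 1
  field

lemma mul_inv_sq_log_div_mul_le (hx : 2 ≤ x) :
    x * (((log x / x) ^ 2)⁻¹ * (1 - x⁻¹)) ≤ 2 * x ^ 3 := by
  have hx0 : 0 < x := by linarith
  have hlog : 0 < log x := log_pos (by linarith)
  have hlower : 1 / 2 ≤ 1 - x⁻¹ := by
    linarith [inv_anti₀ two_pos hx]
  have hupper : 1 - x⁻¹ ≤ log x := one_sub_inv_le_log_of_pos hx0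
  calc _ ≤ x * (((log x / x) ^ 2)⁻¹ * (2 * log x ^ 2)) := by
        gcongr
        nlinarith
    _ = 2 * x ^ 3 := by field

lemma one_le_two_mul_rpow_mul_exp (hx : 0 < x) {K : ℝ} (hK : K ^ 2 * log x ≤ 5 * log x) :
    1 ≤ 2 * x ^ ((5 : ℝ) / 2) * exp (-(K ^ 2 * log x) / 2) := by
  rw [rpow_def_of_pos hx, mul_assoc, ← exp_add]
  linarith [one_le_exp (x := log x * (5 / 2) + -(K ^ 2 * log x) / 2) (by linarith)]

end EntryTail

theorem kac_entries_bounded_general {d : ℕ} (K : ℝ) (hK : 0 ≤ K) (t : ℕ) :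
    kacMeasure d t {Q : Matrix (Fin d) (Fin d) ℝ |
        ∃ i j : Fin d, K * √(log d / d) ≤ |Q i j|} ≤
      ENNReal.ofReal (2 * d ^ 3 * exp (-(t : ℝ) / (2 * d)) +
        2 * (d : ℝ) ^ ((5 : ℝ) / 2) * exp (-(K ^ 2 * log d) / 2)) := by
  rcases d.eq_zero_or_pos with rfl | hd
  · simp
  have hd0 : (0 : ℝ) < d := Nat.cast_pos.2 hd
  rcases le_or_gt (K ^ 2 * log d) (5 * log d) with htrivial | hlarge
  · exact prob_le_one.trans (ENNReal.one_le_ofReal.2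
      (le_add_of_nonneg_of_le (by positivity) (one_le_two_mul_rpow_mul_exp hd0 htrivial)))
  have hlog : 0 < log d := (log_natCast_nonneg d).lt_of_ne' fun h => by simp [h] at hlarge
  have hK1 : 0 ≤ K ^ 2 - 1 := by linarith [lt_of_mul_lt_mul_right hlarge hlog.le]
  have hd2 : (2 : ℝ) ≤ d := by exact_mod_cast Nat.one_lt_cast.1 ((log_pos_iff hd0.le).1 hlog)
  calc _ ≤ kacMeasure d t {Q | ∃ i j, (K ^ 2 - 1) * (log d / d) + log d / d ≤ Q i j ^ 2} := by
        refine measure_mono fun Q ⟨i, j, h⟩ => ⟨i, j, ?_⟩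
        have hsq := pow_le_pow_left₀ (by positivity) h 2
        rw [mul_pow, sq_sqrt (by positivity), sq_abs] at hsq
        linarith
    _ ≤ _ := kacMeasure_exists_add_le_sq_entry_le t (by positivity) (by positivity)
    _ ≤ _ := by
        refine ENNReal.ofReal_le_ofReal ?_
        linear_combination exp (-t / (2 * d)) * mul_inv_sq_log_div_mul_le hd2 +
          2 * sq_mul_exp_eq_rpow_mul_exp hd0 K

/-- **Lemma 3.4(2)**: with high probability all entries of the Kac walk matrix are small. -/
theorem kac_entries_bounded
    {d : ℕ} (K : ℝ) (hK : 2 ≤ K) (t : ℕ) :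
    kacMeasure d t {Q : Matrix (Fin d) (Fin d) ℝ |
        ∃ i j : Fin d, K * Real.sqrt (Real.log d / d) ≤ |Q i j|} ≤
      ENNReal.ofReal (2 * d ^ 3 * Real.exp (-(t : ℝ) / (2 * d)) +
        2 * (d : ℝ) ^ ((5 : ℝ) / 2) * Real.exp (-(K ^ 2 * Real.log d) / 2)) :=
  kac_entries_bounded_general K (by linarith) t

end KacJL
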